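/- arXiv:2405.09367 — 2 statements merged into one kernel-verified Lean document; each statement's English description precedes it below -/
import Mathlib

section
/- Assume the WENO weight and reconstruction setup with f of class C^∞ on a neighborhood of z having a critical point of exact order k at z with 0 ≤ k ≤ R−3, assume that either R ≥ 5, or k is even, or c_j + c_{j+1} ≠ 0 for every 0 ≤ j ≤ R−2, and assume 2s ≥ r+1. Then the WENO reconstruction attains the optimal order R: there exist C > 0 and h₀ > 0 such that for every ε > 0 and every 0 < h < h₀, |q_{R,h}(x*_h) − f(z + c*·h)| ≤ C·h^R. -/
/-- Simple smoothness indicator `I_{R,i,h}` on the nonuniform stencil `x_{i,h} = z + cᵢ h`,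
with `r = ⌊(R-1)/2⌋`. -/
noncomputable def wenoI (R : ℕ) (c : ℕ → ℝ) (z : ℝ) (f : ℝ → ℝ) (i : ℕ) (h : ℝ) : ℝ :=
  ∑ j ∈ Finset.Ico i (i + (R - 1) / 2),
    ((f (z + c (j + 1) * h) - f (z + c j * h)) / (c (j + 1) - c j)) ^ 2

/-- Squared undivided difference `d_{R,h}` of `f` on the full stencil. -/
noncomputable def wenoD (R : ℕ) (c : ℕ → ℝ) (z : ℝ) (f : ℝ → ℝ) (h : ℝ) : ℝ :=
  (((R - 1).factorial : ℝ) *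
      ∑ i ∈ Finset.range R,
        f (z + c i * h) / ∏ j ∈ (Finset.range R).erase i, (c i - c j)) ^ 2

/-- Unnormalized WENO weight `α_{R,i,h}`, with `r' = ⌈(R-1)/2⌉ = R/2` (ℕ-division). -/
noncomputable def wenoAlpha (R : ℕ) (c : ℕ → ℝ) (z : ℝ) (f : ℝ → ℝ) (s : ℕ) (ε : ℝ)
    (i : ℕ) (h : ℝ) : ℝ :=
  (1 / (((R / 2 : ℕ) : ℝ) + 1)) *
    (1 + (wenoD R c z f h) ^ s / ((wenoI R c z f i h) ^ s + ε))

/-- Normalized WENO weight `ω_{R,i,h}`. -/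
noncomputable def wenoOmega (R : ℕ) (c : ℕ → ℝ) (z : ℝ) (f : ℝ → ℝ) (s : ℕ) (ε : ℝ)
    (i : ℕ) (h : ℝ) : ℝ :=
  wenoAlpha R c z f s ε i h / ∑ j ∈ Finset.range (R / 2 + 1), wenoAlpha R c z f s ε j h

/-- Global average weight `ω_{R,h}`. -/
noncomputable def wenoOmegaG (R : ℕ) (c : ℕ → ℝ) (z : ℝ) (f : ℝ → ℝ) (s : ℕ) (ε : ℝ)
    (h : ℝ) : ℝ :=
  1 / (1 + (wenoD R c z f h) ^ s *
        ∑ i ∈ Finset.range (R / 2 + 1), 1 / ((wenoI R c z f i h) ^ s + ε))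


/-- Lagrange reconstruction value `p_{R,i,h}(x*_h)` of the `i`-th substencil, evaluated at
`x*_h = z + c* h`, with `r = ⌊(R-1)/2⌋`. -/
noncomputable def wenoP (R : ℕ) (c : ℕ → ℝ) (z cstar : ℝ) (f : ℝ → ℝ) (i : ℕ) (h : ℝ) : ℝ :=
  ∑ j ∈ Finset.Icc i (i + (R - 1) / 2),
    (∏ l ∈ (Finset.Icc i (i + (R - 1) / 2)).erase j, (cstar - c l) / (c j - c l)) *
      f (z + c j * h)

/-- Lagrange reconstruction value `p_{R,h}(x*_h)` of the full stencil. -/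
noncomputable def wenoPfull (R : ℕ) (c : ℕ → ℝ) (z cstar : ℝ) (f : ℝ → ℝ) (h : ℝ) : ℝ :=
  ∑ j ∈ Finset.range R,
    (∏ l ∈ (Finset.range R).erase j, (cstar - c l) / (c j - c l)) * f (z + c j * h)

/-- The WENO reconstruction `q_{R,h}(x*_h)`. -/
noncomputable def wenoQ (R : ℕ) (c : ℕ → ℝ) (z cstar : ℝ) (f : ℝ → ℝ) (s : ℕ) (ε h : ℝ) : ℝ :=
  wenoOmegaG R c z f s ε h * wenoPfull R c z cstar f h +
    (1 - wenoOmegaG R c z f s ε h) *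
      ∑ i ∈ Finset.range (R / 2 + 1), wenoOmega R c z f s ε i h * wenoP R c z cstar f i h



open Filter Topology Asymptotics Polynomial in
lemma weno_taylor (f : ℝ → ℝ) (z : ℝ) (U : Set ℝ) (hU : U ∈ 𝓝 z)
    (hf : ContDiffOn ℝ (⊤ : ℕ∞) f U) (n : ℕ) :
    (fun t : ℝ => f (z + t) - ∑ m ∈ Finset.range n, iteratedDeriv m f z / (m.factorial : ℝ) * t ^ m)
      =O[𝓝 0] fun t : ℝ => t ^ n := by
  obtain ⟨δ, hδ, hsub⟩ := Metric.mem_nhds_iff.1 hU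
  have hz : z ∈ Metric.ball z δ := Metric.mem_ball_self hδ
  have h1 := taylor_isLittleO (n := n) (convex_ball z δ) hz
    ((hf.mono hsub).of_le (by exact_mod_cast le_top))
  rw [Metric.isOpen_ball.nhdsWithin_eq hz] at h1
  have ht : Tendsto (fun t : ℝ => z + t) (𝓝 0) (𝓝 z) := by
    have : ContinuousAt (fun t : ℝ => z + t) 0 := by fun_prop
    simpa [ContinuousAt] using this
  have h2 := (h1.comp_tendsto ht).isBigO
  have h3 : (fun t : ℝ => iteratedDeriv n f z / (n.factorial : ℝ) * t ^ n) =O[𝓝 0]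
      fun t : ℝ => t ^ n := (isBigO_refl _ _).const_mul_left _
  have h2' : (fun t : ℝ => f (z + t) - ∑ m ∈ Finset.range (n+1),
      iteratedDeriv m f z / (m.factorial : ℝ) * t ^ m) =O[𝓝 0] fun t : ℝ => t ^ n := by
    refine h2.congr ?_ ?_
    · intro t
      simp only [Function.comp, taylor_within_apply]
      congr 1
      refine Finset.sum_congr rfl fun m _ => ?_
      rw [iteratedDerivWithin_of_isOpen Metric.isOpen_ball hz]
      simp only [add_sub_cancel_left, smul_eq_mul]
      ring
    · intro t; simp
  refine (h2'.add h3).congr_left fun t => ?_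
  rw [Finset.sum_range_succ]; ring

open Filter Topology Asymptotics Polynomial in
lemma weno_taylor_poly (f : ℝ → ℝ) (z : ℝ) (U : Set ℝ) (hU : U ∈ 𝓝 z)
    (hf : ContDiffOn ℝ (⊤ : ℕ∞) f U) (n : ℕ) :
    ∃ T : ℝ[X], T.degree < n ∧ ∀ c : ℝ,
    (fun h : ℝ => f (z + c * h) - T.eval (h * c)) =O[𝓝 0] fun h : ℝ => h ^ n := by
  refine ⟨∑ m ∈ Finset.range n, C (iteratedDeriv m f z / (m.factorial : ℝ)) * X ^ m, ?_, ?_⟩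
  · rw [← Polynomial.mem_degreeLT]
    refine Submodule.sum_mem _ fun m hm => ?_
    rw [Polynomial.mem_degreeLT]
    exact (degree_C_mul_X_pow_le _ _).trans_lt (by exact_mod_cast Finset.mem_range.1 hm)
  · intro c
    have ht : Tendsto (fun t : ℝ => c * t) (𝓝 0) (𝓝 0) := by
      have : ContinuousAt (fun t : ℝ => c * t) 0 := by fun_prop
      simpa [ContinuousAt] using this
    have h1 := (weno_taylor f z U hU hf n).comp_tendsto ht
    refine (h1.trans (g := fun t : ℝ => (c * t) ^ n) (isBigO_refl _ _)).trans ?_ |>.congr_left ?_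
    · simp only [mul_pow]
      exact (isBigO_refl _ _).const_mul_left _
    · intro h
      simp only [Function.comp, eval_finsetSum, eval_mul, eval_C, eval_pow, eval_X, mul_comm c h]

open Filter Topology Asymptotics Polynomial in
lemma weno_lin (f : ℝ → ℝ) (z : ℝ) (U : Set ℝ) (hU : U ∈ 𝓝 z)
    (hf : ContDiffOn ℝ (⊤ : ℕ∞) f U) (n : ℕ) (c : ℕ → ℝ) (S : Finset ℕ) (w : ℕ → ℝ)
    (b : ℝ) (cs : ℝ)
    (hw : ∀ P : ℝ[X], P.degree < n → ∑ j ∈ S, w j * P.eval (c j) = b * P.eval cs) :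
    (fun h : ℝ => ∑ j ∈ S, w j * f (z + c j * h) - b * f (z + cs * h))
      =O[𝓝 0] fun h : ℝ => h ^ n := by
  obtain ⟨T, hT, hO⟩ := weno_taylor_poly f z U hU hf n
  have h1 : (fun h : ℝ => ∑ j ∈ S, w j * (f (z + c j * h) - T.eval (h * c j)))
      =O[𝓝 0] fun h : ℝ => h ^ n :=
    IsBigO.fun_sum fun j _ => (hO (c j)).const_mul_left _
  refine (h1.sub ((hO cs).const_mul_left b)).congr_left fun h => ?_
  have h2 := hw (T.comp (C h * X)) ?_
  · simp only [eval_comp, eval_mul, eval_C, eval_X] at h2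
    simp only [mul_sub, Finset.sum_sub_distrib, h2]
    ring
  · by_cases h0 : T = 0
    · simp [h0]
    have hd : T.natDegree < n := (natDegree_lt_iff_degree_lt h0).2 hT
    refine degree_le_natDegree.trans_lt ?_
    have : (T.comp (C h * X)).natDegree ≤ T.natDegree * 1 :=
      natDegree_comp_le.trans (Nat.mul_le_mul_left _ ((natDegree_C_mul_le h X).trans natDegree_X_le))
    exact_mod_cast (by omega : (T.comp (C h * X)).natDegree < n)

open Filter Topology Asymptotics Polynomial in
lemma weno_lagr (f : ℝ → ℝ) (z : ℝ) (U : Set ℝ) (hU : U ∈ 𝓝 z)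
    (hf : ContDiffOn ℝ (⊤ : ℕ∞) f U) (c : ℕ → ℝ) (S : Finset ℕ) (hinj : Set.InjOn c S)
    (cs : ℝ) :
    (fun h : ℝ => ∑ j ∈ S, (∏ l ∈ S.erase j, (cs - c l) / (c j - c l)) * f (z + c j * h)
        - f (z + cs * h))
      =O[𝓝 0] fun h : ℝ => h ^ S.card := by
  have := weno_lin f z U hU hf S.card c S
    (fun j => ∏ l ∈ S.erase j, (cs - c l) / (c j - c l)) 1 cs ?_
  · simpa using this
  intro P hP
  conv_rhs => rw [Lagrange.eq_interpolate hinj hP]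
  rw [Lagrange.interpolate_apply, eval_finsetSum, one_mul]
  refine Finset.sum_congr rfl fun j _ => ?_
  rw [eval_mul, eval_C, mul_comm, Lagrange.basis, eval_prod]
  congr 1
  refine Finset.prod_congr rfl fun l _ => ?_
  simp [Lagrange.basisDivisor, div_eq_mul_inv, mul_comm]

open Filter Topology Asymptotics Polynomial in
lemma weno_dd (f : ℝ → ℝ) (z : ℝ) (U : Set ℝ) (hU : U ∈ 𝓝 z)
    (hf : ContDiffOn ℝ (⊤ : ℕ∞) f U) (c : ℕ → ℝ) (S : Finset ℕ) (hinj : Set.InjOn c S) :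
    (fun h : ℝ => ∑ j ∈ S, f (z + c j * h) / ∏ l ∈ S.erase j, (c j - c l))
      =O[𝓝 0] fun h : ℝ => h ^ (S.card - 1) := by
  have := weno_lin f z U hU hf (S.card - 1) c S
    (fun j => (∏ l ∈ S.erase j, (c j - c l))⁻¹) 0 0 ?_
  · simpa [div_eq_mul_inv, mul_comm] using this
  intro P hP
  have h1 := Lagrange.coeff_eq_sum hinj (P := P)
    (hP.trans_le (by exact_mod_cast Nat.sub_le _ _))
  rw [coeff_eq_zero_of_degree_lt hP] at h1
  rw [zero_mul, h1]
  refine Finset.sum_congr rfl fun j _ => ?_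
  rw [div_eq_mul_inv, mul_comm]

open Filter Topology Asymptotics in
lemma weno_low (f : ℝ → ℝ) (z : ℝ) (U : Set ℝ) (hU : U ∈ 𝓝 z)
    (hf : ContDiffOn ℝ (⊤ : ℕ∞) f U) (k : ℕ)
    (hcrit : ∀ j : ℕ, 1 ≤ j → j ≤ k → iteratedDeriv j f z = 0)
    (hk1 : iteratedDeriv (k + 1) f z ≠ 0) (a b : ℝ) (hab : a ^ (k + 1) ≠ b ^ (k + 1)) :
    ∃ m > (0 : ℝ), ∀ᶠ h in 𝓝[>] (0 : ℝ),
      m * h ^ (k + 1) ≤ |f (z + b * h) - f (z + a * h)| := by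
  have key : ∀ c : ℝ, (fun h : ℝ => f (z + c * h) - (f z + iteratedDeriv (k + 1) f z /
      ((k + 1).factorial : ℝ) * (c * h) ^ (k + 1))) =O[𝓝[>] 0] fun h : ℝ => h ^ (k + 2) := by
    intro c
    have ht : Tendsto (fun t : ℝ => c * t) (𝓝[>] 0) (𝓝 0) := by
      have : ContinuousAt (fun t : ℝ => c * t) 0 := by fun_prop
      have h2 : Tendsto (fun t : ℝ => c * t) (𝓝 0) (𝓝 0) := by simpa [ContinuousAt] using this
      exact h2.mono_left nhdsWithin_le_nhds
    have h1 := (weno_taylor f z U hU hf (k + 2)).comp_tendsto ht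
    refine (h1.trans (g := fun t : ℝ => (c * t) ^ (k + 2)) (isBigO_refl _ _)).trans ?_
      |>.congr_left ?_
    · simp only [mul_pow]
      exact (isBigO_refl _ _).const_mul_left _
    · intro h
      simp only [Function.comp]
      rw [Finset.sum_range_succ, Finset.sum_range_succ', Finset.sum_eq_zero]
      · simp
      · intro m hm
        rw [hcrit (m + 1) (by omega) (by have := Finset.mem_range.1 hm; omega)]
        simp
  set A := iteratedDeriv (k + 1) f z / ((k + 1).factorial : ℝ) with hA
  have hA0 : A ≠ 0 := div_ne_zero hk1 (by positivity)
  set L := A * (b ^ (k + 1) - a ^ (k + 1)) with hL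
  have hL0 : L ≠ 0 := mul_ne_zero hA0 (sub_ne_zero.2 hab.symm)
  have hL1 : 0 < |L| := abs_pos.2 hL0
  have h2 := (key b).sub (key a)
  obtain ⟨K, hK, hb⟩ := h2.exists_pos
  refine ⟨|L| / 2, by positivity, ?_⟩
  have hsmall : ∀ᶠ h in 𝓝[>] (0 : ℝ), h < |L| / (2 * K) :=
    nhdsWithin_le_nhds (eventually_lt_nhds (by positivity))
  filter_upwards [hb.bound, hsmall, self_mem_nhdsWithin] with h h1 h2 h3
  have h3 : 0 < h := h3
  rw [Real.norm_eq_abs, Real.norm_eq_abs, abs_of_pos (pow_pos h3 _)] at h1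
  rw [lt_div_iff₀ (by positivity)] at h2
  have e : L * h ^ (k + 1) = (f (z + b * h) - f (z + a * h)) -
    (f (z + b * h) - (f z + A * (b * h) ^ (k + 1)) -
      (f (z + a * h) - (f z + A * (a * h) ^ (k + 1)))) := by
    rw [hL]; ring
  have e2 : |L| * h ^ (k + 1) ≤ |f (z + b * h) - f (z + a * h)| + K * h ^ (k + 2) := by
    rw [← abs_of_pos (pow_pos h3 (k + 1)), ← abs_mul, e]
    exact (abs_sub _ _).trans (by gcongr)
  have : K * h ^ (k + 2) ≤ |L| / 2 * h ^ (k + 1) := by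
    have := pow_pos h3 (k + 1)
    rw [pow_succ h (k + 1)]
    nlinarith
  linarith

open Filter in
lemma weno_unif (l : Filter ℝ) (N : ℕ) (P : ℕ → ℝ → ℝ → Prop)
    (mono : ∀ i C C' h, C ≤ C' → P i C h → P i C' h)
    (H : ∀ i < N, ∃ C > (0 : ℝ), ∀ᶠ h in l, P i C h) :
    ∃ C > (0 : ℝ), ∀ᶠ h in l, ∀ i < N, P i C h := by
  induction N with
  | zero => exact ⟨1, one_pos, by simp⟩
  | succ n ih =>
    obtain ⟨C, hC, h1⟩ := ih fun i hi => H i (by omega)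
    obtain ⟨C', hC', h2⟩ := H n (by omega)
    refine ⟨max C C', lt_max_of_lt_left hC, ?_⟩
    filter_upwards [h1, h2] with h a b i hi
    rcases Nat.lt_succ_iff_lt_or_eq.1 hi with hi | rfl
    · exact mono _ _ _ _ (le_max_left _ _) (a i hi)
    · exact mono _ _ _ _ (le_max_right _ _) b

lemma wenoI_nonneg (R : ℕ) (c : ℕ → ℝ) (z : ℝ) (f : ℝ → ℝ) (i : ℕ) (h : ℝ) :
    0 ≤ wenoI R c z f i h := Finset.sum_nonneg fun _ _ => sq_nonneg _

lemma wenoD_nonneg (R : ℕ) (c : ℕ → ℝ) (z : ℝ) (f : ℝ → ℝ) (h : ℝ) :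
    0 ≤ wenoD R c z f h := sq_nonneg _

lemma weno_combine (R : ℕ) (hR : 3 ≤ R) (c : ℕ → ℝ) (z cstar : ℝ) (f : ℝ → ℝ)
    (k : ℕ) (hk : k ≤ R - 3) (s : ℕ) (hs : (R - 1) / 2 + 1 ≤ 2 * s)
    (A B D K ε h : ℝ) (hA : 0 < A) (hB : 0 < B) (hD : 0 < D) (hK : 0 < K)
    (hε : 0 < ε) (h0 : 0 < h) (h1 : h < 1)
    (eA : |wenoPfull R c z cstar f h - f (z + cstar * h)| ≤ A * h ^ R)
    (eB : ∀ i < R / 2 + 1, |wenoP R c z cstar f i h - f (z + cstar * h)| ≤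
      B * h ^ ((R - 1) / 2 + 1))
    (eD : wenoD R c z f h ≤ D * h ^ (2 * (R - 1)))
    (eI : ∀ i < R / 2 + 1, h ^ (2 * (k + 1)) ≤ K * wenoI R c z f i h) :
    |wenoQ R c z cstar f s ε h - f (z + cstar * h)| ≤
      (A + ((R / 2 + 1 : ℕ) : ℝ) * (D * K) ^ s * B) * h ^ R := by
  have hden : ∀ i, 0 < wenoI R c z f i h ^ s + ε := fun i =>
    add_pos_of_nonneg_of_pos (pow_nonneg (wenoI_nonneg _ _ _ _ _ _) _) hε
  have hd0 := wenoD_nonneg R c z f h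
  have hratio : ∀ i < R / 2 + 1, wenoD R c z f h ^ s * (1 / (wenoI R c z f i h ^ s + ε)) ≤
      (D * K) ^ s * h ^ ((R - 1) / 2 + 1) := by
    intro i hi
    have hI := wenoI_nonneg R c z f i h
    rw [mul_one_div, div_le_iff₀ (hden i)]
    have e1 : wenoD R c z f h ≤ (D * K * h ^ 2) * wenoI R c z f i h := by
      calc wenoD R c z f h ≤ D * h ^ (2 * (R - 1)) := eD
        _ ≤ D * h ^ (2 + 2 * (k + 1)) := by
          gcongr D * ?_
          exact pow_le_pow_of_le_one h0.le h1.le (by omega)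
        _ = D * h ^ 2 * h ^ (2 * (k + 1)) := by rw [pow_add]; ring
        _ ≤ D * h ^ 2 * (K * wenoI R c z f i h) := by
          gcongr; exact eI i hi
        _ = _ := by ring
    calc wenoD R c z f h ^ s ≤ ((D * K * h ^ 2) * wenoI R c z f i h) ^ s := by gcongr
      _ = (D * K) ^ s * h ^ (2 * s) * wenoI R c z f i h ^ s := by
        rw [mul_pow, mul_pow _ (h ^ 2), ← pow_mul]
      _ ≤ (D * K) ^ s * h ^ ((R - 1) / 2 + 1) * (wenoI R c z f i h ^ s + ε) := by
        have : h ^ (2 * s) ≤ h ^ ((R - 1) / 2 + 1) := pow_le_pow_of_le_one h0.le h1.le hs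
        gcongr
        linarith
  set X := wenoD R c z f h ^ s *
    ∑ i ∈ Finset.range (R / 2 + 1), 1 / ((wenoI R c z f i h) ^ s + ε) with hX
  have hX0 : 0 ≤ X := mul_nonneg (pow_nonneg hd0 _)
    (Finset.sum_nonneg fun i _ => (one_div_pos.2 (hden i)).le)
  have hX1 : X ≤ ((R / 2 + 1 : ℕ) : ℝ) * (D * K) ^ s * h ^ ((R - 1) / 2 + 1) := by
    rw [hX, Finset.mul_sum]
    refine (Finset.sum_le_card_nsmul _ _ _ fun i hi => hratio i (Finset.mem_range.1 hi)).trans ?_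
    rw [Finset.card_range, nsmul_eq_mul, mul_assoc]
  have hG : wenoOmegaG R c z f s ε h = 1 / (1 + X) := rfl
  set w := wenoOmegaG R c z f s ε h with hw
  have hw0 : 0 ≤ w := by rw [hG]; positivity
  have hw1 : w ≤ 1 := by rw [hG, div_le_one (by positivity)]; linarith
  have hwX : 1 - w ≤ X := by
    have : w * (1 + X) = 1 := by rw [hG]; field_simp
    nlinarith
  have hα : ∀ i, 0 < wenoAlpha R c z f s ε i h := fun i => by
    have := hden i
    unfold wenoAlpha; positivity
  have hαs : 0 < ∑ j ∈ Finset.range (R / 2 + 1), wenoAlpha R c z f s ε j h :=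
    Finset.sum_pos (fun i _ => hα i) ⟨0, by simp⟩
  have hΩ0 : ∀ i, 0 ≤ wenoOmega R c z f s ε i h := fun i => div_nonneg (hα i).le hαs.le
  have hΩ1 : ∑ i ∈ Finset.range (R / 2 + 1), wenoOmega R c z f s ε i h = 1 := by
    unfold wenoOmega
    rw [← Finset.sum_div, div_self hαs.ne']
  set F := f (z + cstar * h)
  have hsum : |∑ i ∈ Finset.range (R / 2 + 1), wenoOmega R c z f s ε i h *
      wenoP R c z cstar f i h - F| ≤ B * h ^ ((R - 1) / 2 + 1) := by
    have e : ∑ i ∈ Finset.range (R / 2 + 1), wenoOmega R c z f s ε i h *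
        wenoP R c z cstar f i h - F = ∑ i ∈ Finset.range (R / 2 + 1), wenoOmega R c z f s ε i h *
        (wenoP R c z cstar f i h - F) := by
      simp only [mul_sub, Finset.sum_sub_distrib, ← Finset.sum_mul, hΩ1, one_mul]
    rw [e]
    calc _ ≤ ∑ i ∈ Finset.range (R / 2 + 1), |wenoOmega R c z f s ε i h *
        (wenoP R c z cstar f i h - F)| := Finset.abs_sum_le_sum_abs _ _
      _ ≤ ∑ i ∈ Finset.range (R / 2 + 1), wenoOmega R c z f s ε i h *
        (B * h ^ ((R - 1) / 2 + 1)) := by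
        refine Finset.sum_le_sum fun i hi => ?_
        rw [abs_mul, abs_of_nonneg (hΩ0 i)]
        exact mul_le_mul_of_nonneg_left (eB i (Finset.mem_range.1 hi)) (hΩ0 i)
      _ = _ := by rw [← Finset.sum_mul, hΩ1, one_mul]
  have hQ : wenoQ R c z cstar f s ε h - F = w * (wenoPfull R c z cstar f h - F) +
      (1 - w) * (∑ i ∈ Finset.range (R / 2 + 1), wenoOmega R c z f s ε i h *
      wenoP R c z cstar f i h - F) := by
    unfold wenoQ; rw [← hw]; ring
  rw [hQ]
  refine (abs_add_le _ _).trans ?_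
  rw [abs_mul, abs_mul, abs_of_nonneg hw0, abs_of_nonneg (sub_nonneg.2 hw1), add_mul]
  have hpow : h ^ ((R - 1) / 2 + 1) * h ^ ((R - 1) / 2 + 1) ≤ h ^ R := by
    rw [← pow_add]
    exact pow_le_pow_of_le_one h0.le h1.le (by omega)
  refine add_le_add ?_ ?_
  · calc _ ≤ 1 * (A * h ^ R) := by gcongr
      _ = _ := one_mul _
  · calc _ ≤ (((R / 2 + 1 : ℕ) : ℝ) * (D * K) ^ s * h ^ ((R - 1) / 2 + 1)) *
          (B * h ^ ((R - 1) / 2 + 1)) := by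
          have := sub_nonneg.2 hw1
          gcongr
          exact hwX.trans hX1
      _ = ((R / 2 + 1 : ℕ) : ℝ) * (D * K) ^ s * B *
          (h ^ ((R - 1) / 2 + 1) * h ^ ((R - 1) / 2 + 1)) := by ring
      _ ≤ _ := by gcongr

lemma weno_window (R : ℕ) (hR : 3 ≤ R) (c : ℕ → ℝ)
    (hc : ∀ i j : ℕ, i < j → j < R → c i < c j) (k : ℕ)
    (hexc : 5 ≤ R ∨ Even k ∨ ∀ j : ℕ, j ≤ R - 2 → c j + c (j + 1) ≠ 0)
    (i : ℕ) (hi : i < R / 2 + 1) :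
    ∃ j ∈ Finset.Ico i (i + (R - 1) / 2), c j ^ (k + 1) ≠ c (j + 1) ^ (k + 1) := by
  have hlt := hc i (i + 1) (by omega) (by omega)
  have hmem : i ∈ Finset.Ico i (i + (R - 1) / 2) := by simp; omega
  have hsym : ∀ j, j + 1 < R → c j ^ (k + 1) = c (j + 1) ^ (k + 1) →
      ¬ Even k ∧ c j + c (j + 1) = 0 := by
    intro j hj he
    have hl := hc j (j + 1) (by omega) hj
    have hk : ¬ Even k := fun hk =>
      hl.ne ((Even.add_one hk).strictMono_pow.injective he)
    refine ⟨hk, ?_⟩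
    have hk' : Even (k + 1) := by
      rw [Nat.even_add_one]; exact hk
    have := (pow_eq_pow_iff_cases).1 he
    rcases this with h | h | h
    · omega
    · exact absurd h hl.ne
    · linarith [h.1]
  by_cases he : c i ^ (k + 1) = c (i + 1) ^ (k + 1)
  · obtain ⟨h1, h2⟩ := hsym i (by omega) he
    rcases hexc with h | h | h
    · refine ⟨i + 1, by simp; omega, fun he' => ?_⟩
      have h3 := (hsym (i + 1) (by omega) he').2
      have := hc (i + 1) (i + 1 + 1) (by omega) (by omega)
      linarith
    · exact absurd h h1
    · exact absurd h2 (h i (by omega))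
  · exact ⟨i, hmem, he⟩

/-- **Optimal order of the WENO reconstruction in the smooth case.** If `f` is `C^∞` near `z`
with a critical point of exact order `k ≤ R-3` at `z`, either `R ≥ 5`, or `k` even, or no
symmetric node pair, and `2s ≥ r+1`, then `q_{R,h}(x*_h) = f(x*_h) + O(h^R)`, uniformly in
`ε > 0`. -/
theorem stmt_12 (R : ℕ) (hR : 3 ≤ R) (c : ℕ → ℝ)
    (hc : ∀ i j : ℕ, i < j → j < R → c i < c j)
    (z cstar : ℝ) (f : ℝ → ℝ) (U : Set ℝ) (hU : U ∈ nhds z)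
    (hf : ContDiffOn ℝ (⊤ : ℕ∞) f U)
    (k : ℕ) (hk : k ≤ R - 3)
    (hcrit : ∀ j : ℕ, 1 ≤ j → j ≤ k → iteratedDeriv j f z = 0)
    (hk1 : iteratedDeriv (k + 1) f z ≠ 0)
    (hexc : 5 ≤ R ∨ Even k ∨ ∀ j : ℕ, j ≤ R - 2 → c j + c (j + 1) ≠ 0)
    (s : ℕ) (hs : (R - 1) / 2 + 1 ≤ 2 * s) :
    ∃ C > (0 : ℝ), ∃ h₀ > (0 : ℝ), ∀ ε > (0 : ℝ), ∀ h : ℝ, 0 < h → h < h₀ →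
      |wenoQ R c z cstar f s ε h - f (z + cstar * h)| ≤ C * h ^ R := by
  have hinj : ∀ S : Finset ℕ, (∀ x ∈ S, x < R) → Set.InjOn c S := by
    intro S hS x hx y hy hxy
    rcases lt_trichotomy x y with h | h | h
    · exact absurd hxy (hc x y h (hS y hy)).ne
    · exact h
    · exact absurd hxy (hc y x h (hS x hx)).ne'
  have hle : nhdsWithin (0 : ℝ) (Set.Ioi 0) ≤ nhds 0 := nhdsWithin_le_nhds
  have hpos : ∀ᶠ h in nhdsWithin (0 : ℝ) (Set.Ioi 0), 0 < h := self_mem_nhdsWithin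
  -- full stencil
  obtain ⟨A, hA, eA⟩ : ∃ A > (0 : ℝ), ∀ᶠ h in nhdsWithin (0 : ℝ) (Set.Ioi 0),
      |wenoPfull R c z cstar f h - f (z + cstar * h)| ≤ A * h ^ R := by
    obtain ⟨A, hA, h1⟩ := ((weno_lagr f z U hU hf c (Finset.range R)
      (hinj _ (by simp)) cstar).mono hle).exists_pos
    refine ⟨A, hA, ?_⟩
    filter_upwards [h1.bound, hpos] with h h2 h3
    rw [Real.norm_eq_abs, Real.norm_eq_abs, abs_of_pos (pow_pos h3 _), Finset.card_range] at h2
    exact h2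
  obtain ⟨B, hB, eB⟩ := weno_unif (nhdsWithin (0 : ℝ) (Set.Ioi 0)) (R / 2 + 1)
    (fun i C h => 0 < h ∧ |wenoP R c z cstar f i h - f (z + cstar * h)| ≤
      C * h ^ ((R - 1) / 2 + 1))
    (fun i C C' h hCC hh => ⟨hh.1, hh.2.trans
      (mul_le_mul_of_nonneg_right hCC (pow_pos hh.1 _).le)⟩) (by
    intro i hi
    obtain ⟨A, hA, h1⟩ := ((weno_lagr f z U hU hf c (Finset.Icc i (i + (R - 1) / 2))
      (hinj _ (by intro x hx; rw [Finset.mem_Icc] at hx; omega)) cstar).mono hle).exists_pos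
    refine ⟨A, hA, ?_⟩
    filter_upwards [h1.bound, hpos] with h h2 h3
    rw [Real.norm_eq_abs, Real.norm_eq_abs, abs_of_pos (pow_pos h3 _), Nat.card_Icc,
      show i + (R - 1) / 2 + 1 - i = (R - 1) / 2 + 1 by omega] at h2
    exact ⟨h3, h2⟩)
  obtain ⟨D, hD, eD⟩ : ∃ D > (0 : ℝ), ∀ᶠ h in nhdsWithin (0 : ℝ) (Set.Ioi 0),
      wenoD R c z f h ≤ D * h ^ (2 * (R - 1)) := by
    obtain ⟨A, hA, h1⟩ := ((weno_dd f z U hU hf c (Finset.range R)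
      (hinj _ (by simp))).mono hle).exists_pos
    refine ⟨(((R - 1).factorial : ℝ) * A) ^ 2, by positivity, ?_⟩
    filter_upwards [h1.bound, hpos] with h h2 h3
    rw [Real.norm_eq_abs, Real.norm_eq_abs, abs_of_pos (pow_pos h3 _), Finset.card_range] at h2
    unfold wenoD
    rw [mul_comm 2 (R - 1), pow_mul, ← mul_pow, ← sq_abs, abs_mul, Nat.abs_cast, mul_assoc]
    gcongr
  obtain ⟨K, hK, eK⟩ := weno_unif (nhdsWithin (0 : ℝ) (Set.Ioi 0)) (R / 2 + 1)
    (fun i C h => h ^ (2 * (k + 1)) ≤ C * wenoI R c z f i h)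
    (fun i C C' h hCC hh => hh.trans
      (mul_le_mul_of_nonneg_right hCC (wenoI_nonneg R c z f i h))) (by
    intro i hi
    obtain ⟨j, hj, hne⟩ := weno_window R hR c hc k hexc i hi
    obtain ⟨m, hm, h1⟩ := weno_low f z U hU hf k hcrit hk1 _ _ hne
    have hgap : 0 < c (j + 1) - c j := by
      rw [Finset.mem_Ico] at hj
      exact sub_pos.2 (hc j (j + 1) (by omega) (by omega))
    refine ⟨((c (j + 1) - c j) / m) ^ 2, by positivity, ?_⟩
    filter_upwards [h1, hpos] with h h2 h3
    have h4 : ((f (z + c (j + 1) * h) - f (z + c j * h)) / (c (j + 1) - c j)) ^ 2 ≤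
        wenoI R c z f i h :=
      Finset.single_le_sum (f := fun j =>
        ((f (z + c (j + 1) * h) - f (z + c j * h)) / (c (j + 1) - c j)) ^ 2)
        (fun _ _ => sq_nonneg _) hj
    refine le_trans ?_ (mul_le_mul_of_nonneg_left h4 (sq_nonneg _))
    rw [← mul_pow, ← sq_abs (_ * _), mul_comm 2 (k + 1), pow_mul]
    have e : (c (j + 1) - c j) / m * ((f (z + c (j + 1) * h) - f (z + c j * h)) /
        (c (j + 1) - c j)) = (f (z + c (j + 1) * h) - f (z + c j * h)) / m := by
      field_simp
    rw [e, abs_div, abs_of_pos hm]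
    gcongr
    rw [le_div_iff₀ hm, mul_comm]
    exact h2)
  refine ⟨A + ((R / 2 + 1 : ℕ) : ℝ) * (D * K) ^ s * B, by positivity, ?_⟩
  have hone : ∀ᶠ h in nhdsWithin (0 : ℝ) (Set.Ioi 0), h < 1 :=
    hle (eventually_lt_nhds one_pos)
  obtain ⟨h₀, hh0, hall⟩ := mem_nhdsGT_iff_exists_Ioo_subset.1
    (eA.and (eB.and (eD.and (eK.and hone))))
  refine ⟨h₀, hh0, fun ε hε h h0 hlt => ?_⟩
  obtain ⟨a1, a2, a3, a4, a5⟩ := hall ⟨h0, hlt⟩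
  exact weno_combine R hR c z cstar f k hk s hs A B D K ε h hA hB hD hK hε h0 a5 a1
    (fun i hi => (a2 i hi).2) a3 a4
end

section
/- Assume the WENO weight and reconstruction setup in the jump setting, with additionally: l ≤ r−1 (so that every clean substencil lies to the right of z), c* > 0, κ := Σ_{i=l+1}^{R−1} 1/Π_{j≠i}(c_i − c_j) ≠ 0, and 2s ≥ r+1. Then the WENO reconstruction is essentially non-oscillatory with the expected reduced order: there exist C > 0 and h₀ > 0 such that for every ε with 0 < ε ≤ 1 and every 0 < h < h₀, |q_{R,h}(x*_h) − f(z + c*·h)| ≤ C·(h^{r+1} + ε). -/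
open Filter Topology Asymptotics in
lemma weno_taylor_s13 (g : ℝ → ℝ) (z : ℝ) (U : Set ℝ) (hU : U ∈ nhds z)
    (hg : ContDiffOn ℝ (⊤ : ℕ∞) g U) (n : ℕ) :
    ∃ a : ℕ → ℝ, ∀ c : ℝ, 0 ≤ c →
      (fun h : ℝ => g (z + c * h) - ∑ k ∈ Finset.range (n + 1), a k * (c * h) ^ k)
        =O[𝓝[>] 0] (fun h : ℝ => h ^ (n + 1)) := by
  obtain ⟨b, hb, hbU⟩ := Metric.nhds_basis_closedBall.mem_iff.1 hU
  have hsub : Set.Icc z (z + b) ⊆ U := by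
    intro x hx
    apply hbU
    rw [Metric.mem_closedBall, Real.dist_eq, abs_le]
    constructor <;> linarith [hx.1, hx.2]
  have h1 : ContDiffOn ℝ ((n : WithTop ℕ∞) + 1) g (Set.Icc z (z + b)) := by
    refine (hg.mono hsub).of_le ?_
    exact_mod_cast le_top
  obtain ⟨K, hK⟩ := exists_taylor_mean_remainder_bound (by linarith) h1
  refine ⟨fun k => ((k.factorial : ℝ)⁻¹) * iteratedDerivWithin k g (Set.Icc z (z + b)) z, ?_⟩
  intro c hc
  refine IsBigO.of_bound (K * c ^ (n + 1)) ?_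
  have hev : ∀ᶠ h in 𝓝[>] (0 : ℝ), c * h < b := by
    have : Tendsto (fun h : ℝ => c * h) (𝓝[>] 0) (𝓝 0) := by
      have : Tendsto (fun h : ℝ => c * h) (𝓝 0) (𝓝 (c * 0)) := by
        apply Continuous.tendsto; fun_prop
      rw [mul_zero] at this
      exact this.mono_left nhdsWithin_le_nhds
    exact this.eventually (gt_mem_nhds hb)
  filter_upwards [hev, self_mem_nhdsWithin] with h hh hpos
  have hpos : 0 < h := hpos
  have hch : 0 ≤ c * h := by positivity
  have := hK (z + c * h) ⟨by linarith, by linarith⟩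
  rw [taylor_within_apply] at this
  simp only [add_sub_cancel_left, smul_eq_mul] at this
  rw [Real.norm_of_nonneg (by positivity : (0 : ℝ) ≤ h ^ (n + 1))]
  rw [mul_assoc, ← mul_pow]
  have e : ∑ k ∈ Finset.range (n + 1), (k.factorial : ℝ)⁻¹ *
      iteratedDerivWithin k g (Set.Icc z (z + b)) z * (c * h) ^ k =
      ∑ k ∈ Finset.range (n + 1), (k.factorial : ℝ)⁻¹ * (c * h) ^ k *
      iteratedDerivWithin k g (Set.Icc z (z + b)) z :=
    Finset.sum_congr rfl fun k _ => by ring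
  rw [e]
  exact this

lemma weno_lagrange (S : Finset ℕ) (c : ℕ → ℝ) (hc : Set.InjOn c S) (n : ℕ) (hn : n < S.card)
    (a : ℕ → ℝ) (x h : ℝ) :
    ∑ j ∈ S, (∏ l ∈ S.erase j, (x - c l) / (c j - c l)) *
      (∑ k ∈ Finset.range (n + 1), a k * (c j * h) ^ k) =
    ∑ k ∈ Finset.range (n + 1), a k * (x * h) ^ k := by
  let P : Polynomial ℝ := ∑ k ∈ Finset.range (n + 1),
    Polynomial.C (a k * h ^ k) * Polynomial.X ^ k
  have hP : ∀ y, P.eval y = ∑ k ∈ Finset.range (n + 1), a k * (y * h) ^ k := by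
    intro y
    simp only [P, Polynomial.eval_finsetSum, Polynomial.eval_mul, Polynomial.eval_C,
      Polynomial.eval_pow, Polynomial.eval_X]
    refine Finset.sum_congr rfl fun k _ => ?_
    rw [mul_pow]; ring
  have hdeg : P.degree < (S.card : WithBot ℕ) := by
    refine (Polynomial.degree_sum_le _ _).trans_lt ?_
    rw [Finset.sup_lt_iff (WithBot.bot_lt_coe _)]
    intro k hk
    refine (Polynomial.degree_C_mul_X_pow_le _ _).trans_lt ?_
    have := Finset.mem_range.1 hk
    exact_mod_cast (by omega : k < S.card)
  have h1 := congrArg (Polynomial.eval x) (Lagrange.eq_interpolate hc hdeg)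
  rw [hP, Lagrange.interpolate_apply, Polynomial.eval_finsetSum] at h1
  rw [h1]
  refine Finset.sum_congr rfl fun j _ => ?_
  rw [Polynomial.eval_mul, Polynomial.eval_C, hP, mul_comm, Lagrange.basis, Polynomial.eval_prod]
  congr 1
  refine Finset.prod_congr rfl fun l _ => ?_
  simp [Lagrange.basisDivisor, div_eq_inv_mul]

lemma weno_weights (R : ℕ) (hR : 3 ≤ R) (c : ℕ → ℝ) (hc : Set.InjOn c (Finset.range R)) :
    ∑ i ∈ Finset.range R, 1 / ∏ j ∈ (Finset.range R).erase i, (c i - c j) = 0 := by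
  have hd : (1 : Polynomial ℝ).degree < ((Finset.range R).card : WithBot ℕ) := by
    rw [Polynomial.degree_one, Finset.card_range]
    exact_mod_cast (by omega : 0 < R)
  have := Lagrange.coeff_eq_sum hc hd
  simp only [Polynomial.eval_one] at this
  rw [← this, Polynomial.coeff_one, if_neg]
  simp; omega

open Filter Topology Asymptotics in
lemma weno_clean (S : Finset ℕ) (c : ℕ → ℝ) (hc : Set.InjOn c S) (hpos : ∀ j ∈ S, 0 ≤ c j)
    (g : ℝ → ℝ) (z x : ℝ) (hx : 0 ≤ x) (U : Set ℝ) (hU : U ∈ nhds z)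
    (hg : ContDiffOn ℝ (⊤ : ℕ∞) g U) (n : ℕ) (hn : n < S.card) :
    (fun h : ℝ => (∑ j ∈ S, (∏ l ∈ S.erase j, (x - c l) / (c j - c l)) * g (z + c j * h))
      - g (z + x * h)) =O[𝓝[>] 0] (fun h : ℝ => h ^ (n + 1)) := by
  obtain ⟨a, ha⟩ := weno_taylor_s13 g z U hU hg n
  have h1 : (fun h : ℝ => ∑ j ∈ S, (∏ l ∈ S.erase j, (x - c l) / (c j - c l)) *
      (g (z + c j * h) - ∑ k ∈ Finset.range (n + 1), a k * (c j * h) ^ k))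
      =O[𝓝[>] 0] (fun h : ℝ => h ^ (n + 1)) :=
    IsBigO.fun_sum fun j hj => (ha (c j) (hpos j hj)).const_mul_left _
  refine (h1.sub (ha x hx)).congr_left fun h => ?_
  simp only [mul_sub, Finset.sum_sub_distrib]
  rw [weno_lagrange S c hc n hn]
  ring

lemma weno_core (N s : ℕ) (I : ℕ → ℝ) (d ε η A B δ Δ ι efull : ℝ) (e : ℕ → ℝ) (k : ℕ)
    (hk : k ∈ Finset.range N) (hI : ∀ i, 0 ≤ I i) (hε : 0 < ε) (hη : 0 ≤ η) (hA : 1 ≤ A)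
    (hB : 0 ≤ B) (hδ : 0 < δ) (hι : 0 < ι) (hd1 : δ ≤ d ^ s) (hd2 : d ^ s ≤ Δ)
    (hIk : I k ^ s ≤ A * η) (hfull : |efull| ≤ B)
    (he : ∀ i ∈ Finset.range N, |e i| ≤ B * η ∨ (ι ≤ I i ^ s ∧ |e i| ≤ B))
    (α : ℕ → ℝ) (m : ℝ) (hm : 0 < m) (hα : ∀ i, α i = m * (1 + d ^ s / (I i ^ s + ε)))
    (ω : ℕ → ℝ) (hω : ∀ i, ω i = α i / ∑ j ∈ Finset.range N, α j) (ωG : ℝ)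
    (hωG : ωG = 1 / (1 + d ^ s * ∑ i ∈ Finset.range N, 1 / (I i ^ s + ε))) :
    |ωG * efull + (1 - ωG) * ∑ i ∈ Finset.range N, ω i * e i| ≤
      (A / δ * B + N * (B + (1 + Δ / ι) * (A / δ) * B)) * (η + ε) := by
  have hD : 0 < d ^ s := lt_of_lt_of_le hδ hd1
  have hΔ : 0 < Δ := hD.trans_le hd2
  have hIs : ∀ i, 0 ≤ I i ^ s := fun i => pow_nonneg (hI i) s
  have hden : ∀ i, 0 < I i ^ s + ε := fun i => by linarith [hIs i]
  have hαpos : ∀ i, 0 < α i := fun i => by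
    rw [hα]
    have := hden i
    positivity
  have hdk : I k ^ s + ε ≤ A * (η + ε) := by nlinarith
  have hS : ∑ j ∈ Finset.range N, α j > 0 := Finset.sum_pos (fun i _ => hαpos i) ⟨k, hk⟩
  have hSk : α k ≤ ∑ j ∈ Finset.range N, α j :=
    Finset.single_le_sum (f := α) (fun i _ => (hαpos i).le) hk
  have hω0 : ∀ i, 0 ≤ ω i := fun i => by rw [hω]; exact div_nonneg (hαpos i).le hS.le
  have hω1 : ∀ i ∈ Finset.range N, ω i ≤ 1 := fun i hi => by
    rw [hω, div_le_one hS]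
    exact Finset.single_le_sum (f := α) (fun i _ => (hαpos i).le) hi
  have hsum0 : 1 / (I k ^ s + ε) ≤ ∑ i ∈ Finset.range N, 1 / (I i ^ s + ε) :=
    Finset.single_le_sum (f := fun i => 1 / (I i ^ s + ε))
      (fun i _ => (one_div_pos.2 (hden i)).le) hk
  have hkpos : 0 < 1 / (I k ^ s + ε) := one_div_pos.2 (hden k)
  have hX : 0 < d ^ s * ∑ i ∈ Finset.range N, 1 / (I i ^ s + ε) := by
    apply mul_pos hD; linarith
  have hG0 : 0 ≤ ωG := by rw [hωG]; apply one_div_nonneg.2; linarith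
  have hG1 : ωG ≤ 1 := by rw [hωG, div_le_one (by linarith)]; linarith
  have hQ : δ / (A * (η + ε)) ≤ d ^ s / (I k ^ s + ε) :=
    div_le_div₀ hD.le hd1 (hden k) hdk
  have hAη : 0 < A * (η + ε) := by positivity
  have hG : ωG ≤ A / δ * (η + ε) := by
    have h1 : δ / (A * (η + ε)) ≤ 1 + d ^ s * ∑ i ∈ Finset.range N, 1 / (I i ^ s + ε) := by
      have h2 : d ^ s * (1 / (I k ^ s + ε)) ≤ d ^ s * ∑ i ∈ Finset.range N, 1 / (I i ^ s + ε) :=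
        mul_le_mul_of_nonneg_left hsum0 hD.le
      rw [mul_one_div] at h2
      linarith
    rw [hωG]
    calc _ ≤ 1 / (δ / (A * (η + ε))) := one_div_le_one_div_of_le (by positivity) h1
      _ = _ := by field_simp
  have hcross : ∀ i, ι ≤ I i ^ s → ω i ≤ (1 + Δ / ι) * (A / δ) * (η + ε) := by
    intro i hi
    have h1 : α i ≤ m * (1 + Δ / ι) := by
      rw [hα]
      have : d ^ s / (I i ^ s + ε) ≤ Δ / ι := div_le_div₀ hΔ.le hd2 hι (by linarith)
      gcongr
    have h2 : m * (δ / (A * (η + ε))) ≤ ∑ j ∈ Finset.range N, α j := by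
      refine le_trans ?_ hSk
      rw [hα]
      gcongr
      linarith
    rw [hω]
    calc _ ≤ m * (1 + Δ / ι) / (m * (δ / (A * (η + ε)))) :=
          div_le_div₀ (by positivity) h1 (by positivity) h2
      _ = _ := by field_simp
  have hterm : ∀ i ∈ Finset.range N,
      |ω i * e i| ≤ (B + (1 + Δ / ι) * (A / δ) * B) * (η + ε) := by
    intro i hi
    rw [abs_mul, abs_of_nonneg (hω0 i)]
    have hp : 0 ≤ (1 + Δ / ι) * (A / δ) * B * (η + ε) := by positivity
    have hp2 : 0 ≤ B * (η + ε) := by positivity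
    rcases he i hi with h | ⟨h, h'⟩
    · have : ω i * |e i| ≤ 1 * (B * η) :=
        mul_le_mul (hω1 i hi) h (abs_nonneg _) zero_le_one
      nlinarith [mul_nonneg hB hε.le]
    · have : ω i * |e i| ≤ (1 + Δ / ι) * (A / δ) * (η + ε) * B :=
        mul_le_mul (hcross i h) h' (abs_nonneg _) (by positivity)
      nlinarith
  have hsum : |∑ i ∈ Finset.range N, ω i * e i| ≤
      N * ((B + (1 + Δ / ι) * (A / δ) * B) * (η + ε)) := by
    refine (Finset.abs_sum_le_sum_abs _ _).trans ((Finset.sum_le_card_nsmul _ _ _ hterm).trans ?_)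
    simp
  calc _ ≤ |ωG * efull| + |(1 - ωG) * ∑ i ∈ Finset.range N, ω i * e i| := abs_add_le _ _
    _ ≤ A / δ * (η + ε) * B + 1 * (N * ((B + (1 + Δ / ι) * (A / δ) * B) * (η + ε))) := by
        rw [abs_mul, abs_mul, abs_of_nonneg hG0, abs_of_nonneg (by linarith : 0 ≤ 1 - ωG)]
        apply add_le_add
        · exact mul_le_mul hG hfull (abs_nonneg _) (by positivity)
        · exact mul_le_mul (by linarith) hsum (abs_nonneg _) zero_le_one
    _ = _ := by ring

open Filter Topology Asymptotics in
/-- **Essentially non-oscillatory property at a jump.** In the jump setting, if every clean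
substencil lies to the right of `z` (`l ≤ r-1`), `c* > 0`, `κ ≠ 0` and `2s ≥ r+1`, then
`q_{R,h}(x*_h) = f(x*_h) + O(h^{r+1}) + O(ε)` for `0 < ε ≤ 1` and small `h`. -/
theorem stmt_13 (R : ℕ) (hR : 3 ≤ R) (c : ℕ → ℝ)
    (hc : ∀ i j : ℕ, i < j → j < R → c i < c j)
    (z cstar : ℝ) (hcstar : 0 < cstar)
    (fL fR f : ℝ → ℝ) (U : Set ℝ) (hU : U ∈ nhds z)
    (hfL : ContDiffOn ℝ (⊤ : ℕ∞) fL U) (hfR : ContDiffOn ℝ (⊤ : ℕ∞) fR U)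
    (hjump : fL z ≠ fR z)
    (hf : ∀ x : ℝ, f x = if x < z then fL x else fR x)
    (l : ℕ) (hl : l + 1 < R) (hcl : c l < 0) (hcl' : 0 ≤ c (l + 1))
    (hlr : l ≤ (R - 1) / 2 - 1)
    (hκ : ∑ i ∈ Finset.Ico (l + 1) R,
        1 / ∏ j ∈ (Finset.range R).erase i, (c i - c j) ≠ 0)
    (s : ℕ) (hs : (R - 1) / 2 + 1 ≤ 2 * s) :
    ∃ C > (0 : ℝ), ∃ h₀ > (0 : ℝ), ∀ ε : ℝ, 0 < ε → ε ≤ 1 → ∀ h : ℝ, 0 < h → h < h₀ →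
      |wenoQ R c z cstar f s ε h - f (z + cstar * h)|
        ≤ C * (h ^ ((R - 1) / 2 + 1) + ε) := by
  have hmono : ∀ i j : ℕ, i ≤ j → j < R → c i ≤ c j := by
    intro i j hij hj
    rcases hij.eq_or_lt with h | h
    · rw [h]
    · exact (hc i j h hj).le
  have hinj : Set.InjOn c (Finset.range R) := by
    intro i hi j hj hij
    have hi : i < R := by simpa using hi
    have hj : j < R := by simpa using hj
    rcases lt_trichotomy i j with h | h | h
    · exact absurd hij (hc i j h hj).ne
    · exact h
    · exact absurd hij (hc j i h hi).ne'
  have hfr : ∀ x h : ℝ, 0 ≤ x → 0 < h → f (z + x * h) = fR (z + x * h) := by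
    intro x h hx hh
    rw [hf, if_neg]
    have : 0 ≤ x * h := by positivity
    linarith
  have hpos : ∀ i, l + 1 ≤ i → i < R → 0 ≤ c i := fun i hi hiR => hcl'.trans (hmono _ _ hi hiR)
  have htz : ∀ x : ℝ, Tendsto (fun h : ℝ => z + x * h) (𝓝[>] 0) (𝓝 z) := by
    intro x
    have : Tendsto (fun h : ℝ => z + x * h) (𝓝 0) (𝓝 (z + x * 0)) := by
      apply Continuous.tendsto; fun_prop
    rw [mul_zero, add_zero] at this
    exact this.mono_left nhdsWithin_le_nhds
  have hTR : ∀ x : ℝ, 0 ≤ x → Tendsto (fun h : ℝ => f (z + x * h)) (𝓝[>] 0) (𝓝 (fR z)) := by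
    intro x hx
    refine ((hfR.continuousOn.continuousAt hU).tendsto.comp (htz x)).congr' ?_
    filter_upwards [self_mem_nhdsWithin] with h hh
    exact (hfr x h hx hh).symm
  have hTL : ∀ x : ℝ, x < 0 → Tendsto (fun h : ℝ => f (z + x * h)) (𝓝[>] 0) (𝓝 (fL z)) := by
    intro x hx
    refine ((hfL.continuousOn.continuousAt hU).tendsto.comp (htz x)).congr' ?_
    filter_upwards [self_mem_nhdsWithin] with h hh
    have hh : 0 < h := hh
    rw [hf, if_pos]
    · rfl
    · nlinarith
  have hT : ∀ i < R, Tendsto (fun h : ℝ => f (z + c i * h)) (𝓝[>] 0)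
      (𝓝 (if i < l + 1 then fL z else fR z)) := by
    intro i hi
    split_ifs with h
    · exact hTL _ ((hmono i l (by omega) (by omega)).trans_lt hcl)
    · exact hTR _ (hpos i (by omega) hi)
  -- limit of d
  set J : ℝ := (∑ i ∈ Finset.Ico (l + 1) R,
        1 / ∏ j ∈ (Finset.range R).erase i, (c i - c j)) * (fR z - fL z) with hJ
  have hJ0 : J ≠ 0 := mul_ne_zero hκ (sub_ne_zero.2 hjump.symm)
  have hsumJ : ∑ i ∈ Finset.range R, (if i < l + 1 then fL z else fR z) /
      ∏ j ∈ (Finset.range R).erase i, (c i - c j) = J := by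
    have h0 := weno_weights R hR c hinj
    have h1 : ∑ i ∈ Finset.range R, (if i < l + 1 then fL z else fR z) /
      ∏ j ∈ (Finset.range R).erase i, (c i - c j) =
      fL z * (∑ i ∈ Finset.range R, 1 / ∏ j ∈ (Finset.range R).erase i, (c i - c j)) +
      ∑ i ∈ Finset.range R, (if i < l + 1 then 0 else
        (fR z - fL z) * (1 / ∏ j ∈ (Finset.range R).erase i, (c i - c j))) := by
      rw [Finset.mul_sum, ← Finset.sum_add_distrib]
      refine Finset.sum_congr rfl fun i _ => ?_
      split_ifs <;> ring
    rw [h1, h0, mul_zero, zero_add, hJ,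
      ← Finset.sum_range_add_sum_Ico _ (by omega : l + 1 ≤ R), mul_comm, Finset.mul_sum]
    rw [Finset.sum_eq_zero (s := Finset.range (l + 1)), zero_add]
    · refine Finset.sum_congr rfl fun i hi => ?_
      have := (Finset.mem_Ico.1 hi).1
      rw [if_neg (by omega)]
    · intro i hi
      rw [if_pos (Finset.mem_range.1 hi)]
  have hdT : Tendsto (fun h => wenoD R c z f h ^ s) (𝓝[>] 0)
      (𝓝 (((((R - 1).factorial : ℝ) * J) ^ 2) ^ s)) := by
    unfold wenoD
    rw [← hsumJ]
    refine ((Tendsto.const_mul _ (tendsto_finsetSum _ fun i hi => ?_)).pow 2).pow s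
    exact (hT i (Finset.mem_range.1 hi)).div_const _
  set d0 : ℝ := ((((R - 1).factorial : ℝ) * J) ^ 2) ^ s with hd0
  have hd0pos : 0 < d0 := by
    have : ((R - 1).factorial : ℝ) ≠ 0 := by exact_mod_cast Nat.factorial_ne_zero _
    positivity
  have hd1 : ∀ᶠ h in 𝓝[>] (0 : ℝ), d0 / 2 < wenoD R c z f h ^ s :=
    hdT.eventually (lt_mem_nhds (by linarith))
  have hd2 : ∀ᶠ h in 𝓝[>] (0 : ℝ), wenoD R c z f h ^ s < 2 * d0 :=
    hdT.eventually (gt_mem_nhds (by linarith))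
  -- indicators
  have hInn : ∀ i h, 0 ≤ wenoI R c z f i h := fun i h =>
    Finset.sum_nonneg fun j _ => sq_nonneg _
  set g0 : ℝ := ((fR z - fL z) / (c (l + 1) - c l)) ^ 2 with hg0
  have hg0pos : 0 < g0 := by
    have h1 : fR z - fL z ≠ 0 := sub_ne_zero.2 hjump.symm
    have h2 : c (l + 1) - c l ≠ 0 := by linarith
    positivity
  have hgT : Tendsto (fun h => ((f (z + c (l + 1) * h) - f (z + c l * h)) /
      (c (l + 1) - c l)) ^ 2) (𝓝[>] 0) (𝓝 g0) :=
    (((hTR _ hcl').sub (hTL _ hcl)).div_const _).pow 2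
  have hcr : ∀ᶠ h in 𝓝[>] (0 : ℝ), ∀ i, i < l + 1 → (g0 / 2) ^ s ≤ wenoI R c z f i h ^ s := by
    filter_upwards [hgT.eventually (lt_mem_nhds (by linarith : g0 / 2 < g0))] with h hh i hi
    refine pow_le_pow_left₀ (by linarith) (hh.le.trans ?_) s
    exact Finset.single_le_sum (f := fun j => ((f (z + c (j + 1) * h) - f (z + c j * h)) /
      (c (j + 1) - c j)) ^ 2) (fun j _ => sq_nonneg _) (Finset.mem_Ico.2 ⟨by omega, by omega⟩)
  have hdiff : ∀ x : ℝ, 0 ≤ x → (fun h => f (z + x * h) - fR z) =O[𝓝[>] 0]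
      (fun h : ℝ => h) := by
    intro x hx
    obtain ⟨a, ha⟩ := weno_taylor_s13 fR z U hU hfR 0
    have h1 := (ha x hx).sub (ha 0 le_rfl)
    simp only [Nat.zero_add, Finset.sum_range_one, pow_zero, pow_one, zero_mul, add_zero] at h1
    refine h1.congr' ?_ (EventuallyEq.refl _ _)
    filter_upwards [self_mem_nhdsWithin] with h hh
    rw [hfr x h hx hh]; ring
  have hIbig : (fun h => wenoI R c z f (R / 2) h ^ s) =O[𝓝[>] 0]
      (fun h : ℝ => h ^ ((R - 1) / 2 + 1)) := by
    have h1 : (fun h => wenoI R c z f (R / 2) h) =O[𝓝[>] 0] (fun h : ℝ => h ^ 2) := by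
      unfold wenoI
      refine IsBigO.fun_sum fun j hj => ?_
      have hj := Finset.mem_Ico.1 hj
      refine IsBigO.pow ?_ 2
      have h2 := (hdiff (c (j + 1)) (hpos _ (by omega) (by omega))).sub
        (hdiff (c j) (hpos _ (by omega) (by omega)))
      refine (h2.const_mul_left (c (j + 1) - c j)⁻¹).congr_left fun h => ?_
      rw [div_eq_inv_mul]; ring
    refine (h1.pow s).trans ?_
    simp only [← pow_mul]
    refine IsBigO.of_bound 1 ?_
    have : ∀ᶠ h in 𝓝[>] (0 : ℝ), h < 1 :=
      nhdsWithin_le_nhds (gt_mem_nhds one_pos)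
    filter_upwards [this, self_mem_nhdsWithin] with h hh hp
    have hp : 0 < h := hp
    rw [Real.norm_of_nonneg (by positivity), Real.norm_of_nonneg (by positivity), one_mul]
    exact pow_le_pow_of_le_one hp.le hh.le hs
  obtain ⟨A0, hA0⟩ := hIbig.bound
  -- boundedness
  have hbd : ∀ (u : ℝ → ℝ) (a : ℝ), Tendsto u (𝓝[>] 0) (𝓝 a) →
      ∃ B : ℝ, ∀ᶠ h in 𝓝[>] (0 : ℝ), |u h| ≤ B := by
    intro u a hu
    refine ⟨|a| + 1, ?_⟩
    filter_upwards [hu.abs.eventually (gt_mem_nhds (lt_add_one _))] with h hh using hh.le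
  have hfs := hTR cstar hcstar.le
  obtain ⟨B1, hB1⟩ : ∃ B : ℝ, ∀ᶠ h in 𝓝[>] (0 : ℝ),
      |wenoPfull R c z cstar f h - f (z + cstar * h)| ≤ B :=
    hbd _ _ ((tendsto_finsetSum _ fun i hi =>
      Tendsto.const_mul _ (hT i (Finset.mem_range.1 hi))).sub hfs)
  have hB2 : ∀ i, ∃ B : ℝ, i ∈ Finset.range (R / 2 + 1) → ∀ᶠ h in 𝓝[>] (0 : ℝ),
      |wenoP R c z cstar f i h - f (z + cstar * h)| ≤ B ∧
      (¬ i < l + 1 → |wenoP R c z cstar f i h - f (z + cstar * h)|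
        ≤ B * h ^ ((R - 1) / 2 + 1)) := by
    intro i
    by_cases hi : i ∈ Finset.range (R / 2 + 1)
    swap
    · exact ⟨0, fun h => absurd h hi⟩
    have hi' := Finset.mem_range.1 hi
    obtain ⟨B, hB⟩ : ∃ B : ℝ, ∀ᶠ h in 𝓝[>] (0 : ℝ),
        |wenoP R c z cstar f i h - f (z + cstar * h)| ≤ B :=
      hbd _ _ ((tendsto_finsetSum _ fun j hj =>
        Tendsto.const_mul _ (hT j (by have := Finset.mem_Icc.1 hj; omega))).sub hfs)
    by_cases hil : i < l + 1
    · exact ⟨B, fun _ => hB.mono fun h hh => ⟨hh, fun hn => absurd hil hn⟩⟩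
    · have hO := weno_clean (Finset.Icc i (i + (R - 1) / 2)) c
        (hinj.mono (by
          intro j hj
          have hj : i ≤ j ∧ j ≤ i + (R - 1) / 2 := by simpa using hj
          have : j < R := by omega
          simpa using this))
        (fun j hj => by
          have := Finset.mem_Icc.1 hj
          exact hpos j (by omega) (by omega))
        fR z cstar hcstar.le U hU hfR ((R - 1) / 2) (by rw [Nat.card_Icc]; omega)
      obtain ⟨K, hK⟩ := hO.bound
      refine ⟨max B K, fun _ => ?_⟩
      filter_upwards [hB, hK, self_mem_nhdsWithin] with h h1 h2 hp
      have hp : 0 < h := hp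
      refine ⟨h1.trans (le_max_left _ _), fun _ => ?_⟩
      rw [Real.norm_of_nonneg (by positivity : 0 ≤ h ^ ((R - 1) / 2 + 1)), Real.norm_eq_abs] at h2
      have e1 : wenoP R c z cstar f i h = ∑ j ∈ Finset.Icc i (i + (R - 1) / 2),
          (∏ l ∈ (Finset.Icc i (i + (R - 1) / 2)).erase j, (cstar - c l) / (c j - c l)) *
          fR (z + c j * h) := by
        unfold wenoP
        refine Finset.sum_congr rfl fun j hj => ?_
        have := Finset.mem_Icc.1 hj
        rw [hfr _ h (hpos j (by omega) (by omega)) hp]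
      rw [e1, hfr _ h hcstar.le hp]
      refine h2.trans ?_
      gcongr
      exact le_max_right _ _
  choose B2 hB2 using hB2
  set B : ℝ := |B1| + ∑ i ∈ Finset.range (R / 2 + 1), |B2 i| with hBdef
  have hBs : 0 ≤ ∑ i ∈ Finset.range (R / 2 + 1), |B2 i| :=
    Finset.sum_nonneg fun i _ => abs_nonneg _
  have hB : 0 ≤ B := by positivity
  have hB1le : B1 ≤ B := by linarith [le_abs_self B1]
  have hB2le : ∀ i ∈ Finset.range (R / 2 + 1), B2 i ≤ B := by
    intro i hi
    have := Finset.single_le_sum (f := fun i => |B2 i|) (fun i _ => abs_nonneg _) hi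
    linarith [le_abs_self (B2 i), abs_nonneg B1]
  have hev2 := (Finset.eventually_all (Finset.range (R / 2 + 1))).2 hB2
  set A : ℝ := max 1 A0 with hA
  have hA1 : 1 ≤ A := le_max_left _ _
  set C : ℝ := A / (d0 / 2) * B + ((R / 2 + 1 : ℕ) : ℝ) *
    (B + (1 + 2 * d0 / (g0 / 2) ^ s) * (A / (d0 / 2)) * B) with hC
  have hC0 : 0 ≤ C := by positivity
  have hfinal : ∀ᶠ h in 𝓝[>] (0 : ℝ), ∀ ε : ℝ, 0 < ε →
      |wenoQ R c z cstar f s ε h - f (z + cstar * h)| ≤ C * (h ^ ((R - 1) / 2 + 1) + ε) := by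
    filter_upwards [hd1, hd2, hcr, hA0, hB1, hev2, self_mem_nhdsWithin]
      with h h1 h2 h3 h4 h5 h6 hp ε hε
    have hp : 0 < h := hp
    have hη : 0 ≤ h ^ ((R - 1) / 2 + 1) := by positivity
    rw [Real.norm_of_nonneg hη, Real.norm_of_nonneg (pow_nonneg (hInn _ _) _)] at h4
    have hm : (0 : ℝ) < 1 / (((R / 2 : ℕ) : ℝ) + 1) := by positivity
    have key := weno_core (R / 2 + 1) s (fun i => wenoI R c z f i h) (wenoD R c z f h) ε
      (h ^ ((R - 1) / 2 + 1)) A B (d0 / 2) (2 * d0) ((g0 / 2) ^ s)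
      (wenoPfull R c z cstar f h - f (z + cstar * h))
      (fun i => wenoP R c z cstar f i h - f (z + cstar * h)) (R / 2)
      (Finset.self_mem_range_succ _) (fun i => hInn i h) hε hη hA1 hB (by linarith)
      (by positivity) h1.le h2.le
      (h4.trans (mul_le_mul_of_nonneg_right (le_max_right _ _) hη)) (h5.trans hB1le)
      (by
        intro i hi
        by_cases hil : i < l + 1
        · exact Or.inr ⟨h3 i hil, (h6 i hi).1.trans (hB2le i hi)⟩
        · exact Or.inl (((h6 i hi).2 hil).trans
            (mul_le_mul_of_nonneg_right (hB2le i hi) hη)))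
      (fun i => wenoAlpha R c z f s ε i h) _ hm (fun i => rfl)
      (fun i => wenoOmega R c z f s ε i h) (fun i => rfl) (wenoOmegaG R c z f s ε h) rfl
    refine le_trans (le_of_eq ?_) key
    congr 1
    have hα : ∀ i, 0 < wenoAlpha R c z f s ε i h := by
      intro i
      have : 0 < wenoI R c z f i h ^ s + ε := by linarith [pow_nonneg (hInn i h) s]
      have hd : 0 < wenoD R c z f h ^ s := by linarith
      unfold wenoAlpha
      positivity
    have hsum1 : ∑ i ∈ Finset.range (R / 2 + 1), wenoOmega R c z f s ε i h = 1 := by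
      unfold wenoOmega
      rw [← Finset.sum_div, div_self]
      exact (Finset.sum_pos (fun i _ => hα i) ⟨0, by simp⟩).ne'
    unfold wenoQ
    simp only [mul_sub, Finset.sum_sub_distrib]
    rw [← Finset.sum_mul, hsum1]
    ring
  obtain ⟨h₀, hh₀, hH⟩ := mem_nhdsGT_iff_exists_Ioo_subset.1 hfinal
  refine ⟨C + 1, by linarith, h₀, hh₀, fun ε hε _ h hp hh => ?_⟩
  refine (hH ⟨hp, hh⟩ ε hε).trans ?_
  have : 0 ≤ h ^ ((R - 1) / 2 + 1) + ε := by positivity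
  nlinarith
end
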